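/- arXiv:2311.06161 — 2 statements merged into one kernel-verified Lean document; each statement's English description precedes it below -/
import Mathlib

section
/- For every positive integers k and l with k ≥ 3, there exists a finite simple graph G such that χ(G) = k, ir(G) = l, and χ_i(G) = k + l − 1. -/
/-!  Common definitions: irredundance, irredundance coloring,
irredundance compelling coloring, and related graph parameters. -/

variable {V : Type*}

/-- The closed neighborhood `N[v]` of a vertex `v`. -/
def closedNbr (G : SimpleGraph V) (v : V) : Set V := insert v (G.neighborSet v)

/-- The private neighbor set `pn[v,S] = N[v] − N[S − {v}]`. -/
def pnSet (G : SimpleGraph V) (S : Set V) (v : V) : Set V :=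
  closedNbr G v \ ⋃ w ∈ S \ {v}, closedNbr G w

/-- A set `S` is irredundant if every vertex of `S` has a private neighbor. -/
def IsIrredundant (G : SimpleGraph V) (S : Set V) : Prop :=
  ∀ v ∈ S, (pnSet G S v).Nonempty

/-- A maximal irredundant set: irredundant, and adding any outside vertex
destroys irredundance. -/
def IsMaxIrredundant (G : SimpleGraph V) (S : Set V) : Prop :=
  IsIrredundant G S ∧ ∀ w ∉ S, ¬ IsIrredundant G (insert w S)

/-- The lower irredundance number `ir(G)`: the minimum cardinality of a
maximal irredundant set. -/
noncomputable def lowerIr (G : SimpleGraph V) : ℕ :=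
  sInf {n | ∃ S : Set V, IsMaxIrredundant G S ∧ S.ncard = n}

/-- A proper coloring of `G` with colors in `Fin k`, viewed as a function. -/
def IsProperColoring (G : SimpleGraph V) {k : ℕ} (C : V → Fin k) : Prop :=
  ∀ u v, G.Adj u v → C u ≠ C v

/-- `G` has an irredundance coloring with `k` colors: a proper coloring
together with a maximal irredundant set whose vertices get distinct colors. -/
def IrredColorable (G : SimpleGraph V) (k : ℕ) : Prop :=
  ∃ C : V → Fin k, IsProperColoring G C ∧
    ∃ R : Set V, IsMaxIrredundant G R ∧ Set.InjOn C R

/-- The irredundance chromatic number `χᵢ(G)`. -/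
noncomputable def irChrom (G : SimpleGraph V) : ℕ := sInf {k | IrredColorable G k}

/-- `S` is a dominating set of `G`. -/
def IsDomSet (G : SimpleGraph V) (S : Set V) : Prop :=
  ∀ v, v ∈ S ∨ ∃ u ∈ S, G.Adj u v

/-- The domination number `γ(G)`. -/
noncomputable def domNum (G : SimpleGraph V) : ℕ :=
  sInf {n | ∃ S : Set V, IsDomSet G S ∧ S.ncard = n}

/-- `G` has a gamma coloring with `k` colors: a proper coloring together with
a dominating set whose vertices get distinct colors. -/
def GammaColorable (G : SimpleGraph V) (k : ℕ) : Prop :=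
  ∃ C : V → Fin k, IsProperColoring G C ∧
    ∃ D : Set V, IsDomSet G D ∧ Set.InjOn C D

/-- The gamma chromatic number `χ_γ(G)`. -/
noncomputable def gammaChrom (G : SimpleGraph V) : ℕ := sInf {k | GammaColorable G k}

/-- A rainbow committee of the coloring `C`: a set containing exactly one
vertex of each color class. -/
def IsRainbowCommittee {k : ℕ} (C : V → Fin k) (T : Set V) : Prop :=
  ∀ i : Fin k, ∃! v, v ∈ T ∧ C v = i

/-- `C` is an irredundance compelling coloring of `G` (with all `k` colors
used): a proper coloring, onto its `k` colors, such that every rainbow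
committee is an irredundant set. -/
def IsIRCColoring (G : SimpleGraph V) {k : ℕ} (C : V → Fin k) : Prop :=
  IsProperColoring G C ∧ Function.Surjective C ∧
    ∀ T : Set V, IsRainbowCommittee C T → IsIrredundant G T

/-- `G` admits an irredundance compelling coloring. -/
def IRCColorable (G : SimpleGraph V) : Prop :=
  ∃ (k : ℕ) (C : V → Fin k), IsIRCColoring G C

/-- The irredundance compelling chromatic number `χ_irc(G)`: the maximum
number of colors among all irredundance compelling colorings of `G`. -/
noncomputable def ircChrom (G : SimpleGraph V) : ℕ :=
  sSup {k | ∃ C : V → Fin k, IsIRCColoring G C}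

/-- `G` has a dominator coloring with `k` colors: a proper coloring, onto its
`k` colors, in which every vertex dominates some color class. -/
def DominatorColorable (G : SimpleGraph V) (k : ℕ) : Prop :=
  ∃ C : V → Fin k, IsProperColoring G C ∧ Function.Surjective C ∧
    ∀ v, ∃ i : Fin k, (∀ u, C u = i → G.Adj v u) ∨ {u | C u = i} = {v}

/-- The dominator chromatic number `χ_d(G)`. -/
noncomputable def domChrom (G : SimpleGraph V) : ℕ := sInf {k | DominatorColorable G k}

/-!
Call a vertex `c` guarded if every neighbor of `c` has, in its closed neighborhood, a vertex
`u ≠ c` with `N[u] ⊆ N[c]`. Then `c` is never the only private neighbor of a vertex other than `c`,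
because whatever destroys the privacy of `u` also destroys that of `c`. Hence a maximal irredundant
set that misses `c` contains every leaf at `c`: a missing leaf could be added without harm. If
guarded vertices carry many leaves, all small maximal irredundant sets contain all of them.

Join an independent set of `l` centers to a clique of `k - 1` hubs, hang many leaves on every
center, and add a common neighbor of degree two for each hub and center, so that the centers become
guarded. The centers dominate the graph and form a smallest maximal irredundant set, so `ir = l`. A
rainbow maximal irredundant set contains all centers, whose colors are therefore distinct and
differ from those of the hubs, so `l + (k - 1)` colors are needed.
-/

theorem mem_closedNbr {G : SimpleGraph V} {u v : V} :
    u ∈ closedNbr G v ↔ u = v ∨ G.Adj v u := Iff.rfl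

theorem mem_closedNbr_comm {G : SimpleGraph V} {u v : V} :
    u ∈ closedNbr G v ↔ v ∈ closedNbr G u :=
  or_congr eq_comm (G.adj_comm v u)

theorem mem_pnSet {G : SimpleGraph V} {S : Set V} {u v : V} :
    u ∈ pnSet G S v ↔ u ∈ closedNbr G v ∧ ∀ w ∈ S, w ≠ v → u ∉ closedNbr G w := by
  simp [pnSet]

theorem pnSet_insert_self (G : SimpleGraph V) (S : Set V) (v : V) :
    pnSet G (insert v S) v = pnSet G S v := by
  simp [pnSet]

theorem pnSet_insert_of_ne {v w : V} (G : SimpleGraph V) (S : Set V) (h : w ≠ v) :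
    pnSet G (insert w S) v = pnSet G S v \ closedNbr G w := by
  ext u
  simp only [mem_pnSet, Set.mem_sdiff, Set.forall_mem_insert]
  tauto

section Iso

variable {W : Type*} {G : SimpleGraph V} {H : SimpleGraph W}

theorem mem_closedNbr_iso (e : G ≃g H) {u v : V} :
    e u ∈ closedNbr H (e v) ↔ u ∈ closedNbr G v :=
  or_congr e.injective.eq_iff e.map_adj_iff

theorem isIrredundant_preimage_iso (e : G ≃g H) {S : Set W} :
    IsIrredundant G (e ⁻¹' S) ↔ IsIrredundant H S := by
  simp only [IsIrredundant, Set.Nonempty, mem_pnSet, e.surjective.forall, e.surjective.exists,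
    mem_closedNbr_iso, Set.mem_preimage, ne_eq, e.injective.eq_iff]

theorem isMaxIrredundant_preimage_iso (e : G ≃g H) {S : Set W} :
    IsMaxIrredundant G (e ⁻¹' S) ↔ IsMaxIrredundant H S := by
  have insert_preimage (w : V) : insert w (e ⁻¹' S) = e ⁻¹' insert (e w) S := by
    ext x
    simp
  simp only [IsMaxIrredundant, e.surjective.forall, insert_preimage, isIrredundant_preimage_iso,
    Set.mem_preimage]

theorem lowerIr_congr (e : G ≃g H) : lowerIr G = lowerIr H := by
  have preimage_surjective : Function.Surjective (fun S : Set W ↦ e ⁻¹' S) :=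
    Set.preimage_surjective.2 e.injective
  have ncard_preimage (S : Set W) : (e ⁻¹' S).ncard = S.ncard :=
    Set.ncard_preimage_of_injective_subset_range e.injective (by simp [e.surjective.range_eq])
  simp only [lowerIr, preimage_surjective.exists, isMaxIrredundant_preimage_iso, ncard_preimage]

theorem IrredColorable.of_iso (e : G ≃g H) {n : ℕ} (h : IrredColorable G n) :
    IrredColorable H n := by
  obtain ⟨C, hC, R, hR, hinj⟩ := h
  exact ⟨C ∘ e.symm, fun u v huv ↦ hC _ _ (e.symm.map_adj_iff.2 huv), e.symm ⁻¹' R,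
    (isMaxIrredundant_preimage_iso e.symm).2 hR,
    hinj.comp e.symm.injective.injOn (Set.mapsTo_preimage _ _)⟩

theorem irChrom_congr (e : G ≃g H) : irChrom G = irChrom H :=
  congrArg sInf (Set.ext fun _ ↦ ⟨.of_iso e, .of_iso e.symm⟩)

end Iso

section MaxIrredundant

variable {G : SimpleGraph V} {R S : Set V} {v w : V}

theorem IsIrredundant.isMaxIrredundant_of_isDomSet (hS : IsIrredundant G S)
    (hdom : IsDomSet G S) : IsMaxIrredundant G S := by
  refine ⟨hS, fun w hw hins ↦ ?_⟩
  obtain ⟨u, hu⟩ := hins w (Set.mem_insert _ _)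
  rw [pnSet_insert_self, mem_pnSet] at hu
  rcases hdom u with huS | ⟨x, hxS, hxu⟩
  · exact hu.2 u huS (ne_of_mem_of_not_mem huS hw) (Or.inl rfl)
  · exact hu.2 x hxS (ne_of_mem_of_not_mem hxS hw) (Or.inr hxu)

theorem IsMaxIrredundant.exists_pnSet_subset_closedNbr (hR : IsMaxIrredundant G R) (hw : w ∉ R)
    (hpn : (pnSet G R w).Nonempty) : ∃ v ∈ R, pnSet G R v ⊆ closedNbr G w := by
  by_contra! h
  refine hR.2 w hw ?_
  rintro v (rfl | hv)
  · rwa [pnSet_insert_self]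
  · rw [pnSet_insert_of_ne G R (ne_of_mem_of_not_mem hv hw).symm]
    exact Set.sdiff_nonempty.2 (h v hv)

end MaxIrredundant

section Guarded

variable {G : SimpleGraph V} {R D K : Set V} {c v : V} {n : ℕ}

/-- A vertex `c` is guarded if the closed neighborhood of each of its neighbors contains a vertex
other than `c` whose closed neighborhood is contained in that of `c`. This keeps `c` from being the
only private neighbor of another vertex. -/
def IsGuarded (G : SimpleGraph V) (c : V) : Prop :=
  ∀ v, G.Adj c v → ∃ u ∈ closedNbr G v, u ≠ c ∧ closedNbr G u ⊆ closedNbr G c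

/-- The leaves (vertices of degree one) whose only neighbor is `c`. -/
def leafSet (G : SimpleGraph V) (c : V) : Set V := {x | G.neighborSet x = {c}}

theorem IsGuarded.exists_mem_pnSet_ne (hc : IsGuarded G c) (hv : v ≠ c)
    (hpn : (pnSet G R v).Nonempty) : ∃ u ∈ pnSet G R v, u ≠ c := by
  obtain ⟨u, hu⟩ := hpn
  rcases ne_or_eq u c with huc | rfl
  · exact ⟨u, hu, huc⟩
  obtain ⟨hadj, hpriv⟩ := mem_pnSet.1 hu
  obtain ⟨x, hxv, hxc, hsub⟩ := hc v (hadj.resolve_left hv.symm).symm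
  exact ⟨x, mem_pnSet.2 ⟨hxv, fun w hw hwv hxw ↦
    hpriv w hw hwv (mem_closedNbr_comm.1 (hsub (mem_closedNbr_comm.1 hxw)))⟩, hxc⟩

theorem mem_closedNbr_iff_of_mem_leafSet {x : V} (hx : x ∈ leafSet G c) :
    v ∈ closedNbr G x ↔ v = x ∨ v = c :=
  or_congr_right (Set.ext_iff.1 hx v)

theorem IsMaxIrredundant.leafSet_subset_of_notMem (hR : IsMaxIrredundant G R)
    (hc : IsGuarded G c) (hcR : c ∉ R) : leafSet G c ⊆ R := by
  intro x hx
  by_contra hxR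
  have hundominated : ∀ w ∈ R, x ∉ closedNbr G w := fun w hw hxw ↦ by
    rcases (mem_closedNbr_iff_of_mem_leafSet hx).1 (mem_closedNbr_comm.1 hxw) with rfl | rfl
    exacts [hxR hw, hcR hw]
  obtain ⟨v, hv, hsub⟩ := hR.exists_pnSet_subset_closedNbr hxR
    ⟨x, mem_pnSet.2 ⟨Or.inl rfl, fun w hw _ ↦ hundominated w hw⟩⟩
  obtain ⟨u, hu, huc⟩ := hc.exists_mem_pnSet_ne (ne_of_mem_of_not_mem hv hcR) (hR.1 v hv)
  obtain rfl : u = x := ((mem_closedNbr_iff_of_mem_leafSet hx).1 (hsub hu)).resolve_right huc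
  exact hundominated v hv (mem_pnSet.1 hu).1

theorem ncard_le_of_injOn {C : V → Fin n} (hC : Set.InjOn C R) : R.ncard ≤ n := by
  simpa using Set.ncard_le_ncard_of_injOn C (fun _ _ ↦ Set.mem_univ _) hC

variable [Finite V]

theorem IsMaxIrredundant.mem_of_ncard_lt_ncard_leafSet (hR : IsMaxIrredundant G R)
    (hc : IsGuarded G c) (hcard : R.ncard < (leafSet G c).ncard) : c ∈ R := by
  by_contra hcR
  exact hcard.not_ge (Set.ncard_le_ncard (hR.leafSet_subset_of_notMem hc hcR))

theorem IsMaxIrredundant.lowerIr_eq_ncard (hD : IsMaxIrredundant G D)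
    (hguard : ∀ c ∈ D, IsGuarded G c) (hleaf : ∀ c ∈ D, D.ncard ≤ (leafSet G c).ncard) :
    lowerIr G = D.ncard := by
  refine IsLeast.csInf_eq ⟨⟨D, hD, rfl⟩, ?_⟩
  rintro _ ⟨R, hR, rfl⟩
  by_contra! hlt
  have hDR : D ⊆ R := fun c hc ↦
    hR.mem_of_ncard_lt_ncard_leafSet (hguard c hc) (hlt.trans_le (hleaf c hc))
  exact hlt.not_ge (Set.ncard_le_ncard hDR)

theorem IrredColorable.ncard_add_ncard_le (h : IrredColorable G n)
    (hguard : ∀ c ∈ D, IsGuarded G c) (hleaf : ∀ c ∈ D, D.ncard + K.ncard ≤ (leafSet G c).ncard)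
    (hclique : G.IsClique K) (hjoin : ∀ c ∈ D, ∀ q ∈ K, G.Adj c q) :
    D.ncard + K.ncard ≤ n := by
  obtain ⟨C, hC, R, hR, hinj⟩ := h
  by_contra! hlt
  have hDR : D ⊆ R := fun c hc ↦ hR.mem_of_ncard_lt_ncard_leafSet (hguard c hc)
    ((ncard_le_of_injOn hinj).trans_lt (hlt.trans_le (hleaf c hc)))
  have hdisj : Disjoint D K := Set.disjoint_left.2 fun c hc hcK ↦ (hjoin c hc c hcK).ne rfl
  have hinj_union : Set.InjOn C (D ∪ K) :=
    (Set.injOn_union hdisj).2 ⟨hinj.mono hDR,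
      fun q hq q' hq' ↦ not_imp_not.1 fun hne ↦ hC q q' (hclique hq hq' hne),
      fun c hc q hq ↦ hC c q (hjoin c hc q hq)⟩
  rw [← Set.ncard_union_eq hdisj] at hlt
  exact hlt.not_ge (ncard_le_of_injOn hinj_union)

end Guarded

theorem IrredColorable.of_coloring {G : SimpleGraph V} {δ : Type*} [Finite δ] (C : G.Coloring δ)
    {R : Set V} (hR : IsMaxIrredundant G R) (hinj : Set.InjOn C R) :
    IrredColorable G (Nat.card δ) :=
  ⟨Finite.equivFin δ ∘ C, fun _ _ h ↦ (Finite.equivFin δ).injective.ne (C.valid h), R, hR,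
    (Finite.equivFin δ).injective.comp_injOn hinj⟩

/-- Vertices of the hub graph: centers indexed by `α`, hubs indexed by `β`, leaves `leaf i j` with
`j : γ` at each center `i`, and a tip for each pair of a hub and a center. -/
inductive HubVertex (α β γ : Type*)
  | center (i : α)
  | hub (q : β)
  | leaf (i : α) (j : γ)
  | tip (q : β) (i : α)

open HubVertex

instance {α β γ : Type*} [Finite α] [Finite β] [Finite γ] : Finite (HubVertex α β γ) := by
  refine Finite.of_surjective
    (Sum.elim (Sum.elim center hub) (Sum.elim leaf.uncurry tip.uncurry)) ?_
  rintro (i | q | ⟨i, j⟩ | ⟨q, i⟩) <;> simp [Function.uncurry]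

/-- Generates the edges of the hub graph, each in at least one direction: hubs are adjacent to
centers and to each other, leaves to their center, tips to their hub and their center. -/
def HubVertex.HalfAdj {α β γ : Type*} : HubVertex α β γ → HubVertex α β γ → Prop
  | center _, hub _ => True
  | hub _, hub _ => True
  | center i, leaf i' _ => i = i'
  | center i, tip _ i' => i = i'
  | hub q, tip q' _ => q = q'
  | _, _ => False

/-- The hub graph: the join of an independent set of
centers and a clique of hubs, with `γ` many leaves hanging on each center and with a tip of degree
two adjacent to each pair of a hub and a center. -/
def hubGraph (α β γ : Type*) : SimpleGraph (HubVertex α β γ) :=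
  SimpleGraph.fromRel HalfAdj

namespace hubGraph

variable {α β γ δ : Type*}

theorem adj_iff {u v : HubVertex α β γ} :
    (hubGraph α β γ).Adj u v ↔ u ≠ v ∧ (HalfAdj u v ∨ HalfAdj v u) := Iff.rfl

theorem adj_center_hub (i : α) (q : β) : (hubGraph α β γ).Adj (center i) (hub q) := by
  simp [adj_iff, HalfAdj]

theorem isClique_range_hub : (hubGraph α β γ).IsClique (Set.range hub) := by
  rintro _ ⟨q, rfl⟩ _ ⟨q', rfl⟩ hne
  simp_all [adj_iff, HalfAdj]

theorem closedNbr_leaf_subset (i : α) (j : γ) :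
    closedNbr (hubGraph α β γ) (leaf i j) ⊆ closedNbr (hubGraph α β γ) (center i) := by
  rintro (_ | _ | _ | _) <;> simp +contextual [mem_closedNbr, adj_iff, HalfAdj]

theorem closedNbr_tip_subset (q : β) (i : α) :
    closedNbr (hubGraph α β γ) (tip q i) ⊆ closedNbr (hubGraph α β γ) (center i) := by
  rintro (_ | _ | _ | _) <;> simp +contextual [mem_closedNbr, adj_iff, HalfAdj]

theorem isGuarded_center (i : α) : IsGuarded (hubGraph α β γ) (center i) := by
  rintro (i' | q | ⟨i', j⟩ | ⟨q, i'⟩) hadj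
  · simp [adj_iff, HalfAdj] at hadj
  · exact ⟨tip q i, by simp [mem_closedNbr, adj_iff, HalfAdj], by simp, closedNbr_tip_subset q i⟩
  · obtain rfl : i = i' := by simpa [adj_iff, HalfAdj] using hadj
    exact ⟨leaf i j, Or.inl rfl, by simp, closedNbr_leaf_subset i j⟩
  · obtain rfl : i = i' := by simpa [adj_iff, HalfAdj] using hadj
    exact ⟨tip q i, Or.inl rfl, by simp, closedNbr_tip_subset q i⟩

theorem leafSet_center (i : α) : leafSet (hubGraph α β γ) (center i) = Set.range (leaf i) := by
  apply Set.Subset.antisymm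
  · intro x hx
    have hadj (v : HubVertex α β γ) : (hubGraph α β γ).Adj x v ↔ v = center i := Set.ext_iff.1 hx v
    cases x with
    | center i' => simpa [adj_iff, HalfAdj] using hadj (center i)
    | hub q => simpa [adj_iff, HalfAdj] using hadj (tip q i)
    | leaf i' j => simpa [adj_iff, HalfAdj, eq_comm] using hadj (center i)
    | tip q i' => simpa [adj_iff, HalfAdj] using hadj (hub q)
  · rintro _ ⟨j, rfl⟩
    ext (_ | _ | _ | _) <;> simp [adj_iff, HalfAdj]

theorem ncard_leafSet_center (i : α) :
    (leafSet (hubGraph α β γ) (center i)).ncard = Nat.card γ := by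
  rw [leafSet_center]
  exact Set.ncard_range_of_injective fun _ _ h ↦ by simpa using h

theorem ncard_range_center : (Set.range (center : α → HubVertex α β γ)).ncard = Nat.card α :=
  Set.ncard_range_of_injective fun _ _ h ↦ by simpa using h

theorem ncard_range_hub : (Set.range (hub : β → HubVertex α β γ)).ncard = Nat.card β :=
  Set.ncard_range_of_injective fun _ _ h ↦ by simpa using h

theorem isIrredundant_range_center [Nonempty γ] :
    IsIrredundant (hubGraph α β γ) (Set.range center) := by
  inhabit γ
  rintro _ ⟨i, rfl⟩
  refine ⟨leaf i default, mem_pnSet.2 ⟨by simp [mem_closedNbr, adj_iff, HalfAdj], ?_⟩⟩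
  rintro _ ⟨i', rfl⟩ hne
  simpa [mem_closedNbr, adj_iff, HalfAdj] using hne

theorem isDomSet_range_center [Nonempty α] : IsDomSet (hubGraph α β γ) (Set.range center) := by
  rintro (i | q | ⟨i, j⟩ | ⟨q, i⟩) <;> simp [adj_iff, HalfAdj]

theorem isMaxIrredundant_range_center [Nonempty α] [Nonempty γ] :
    IsMaxIrredundant (hubGraph α β γ) (Set.range center) :=
  isIrredundant_range_center.isMaxIrredundant_of_isDomSet isDomSet_range_center

theorem lowerIr_eq [Finite α] [Finite β] [Nonempty α] (h : Nat.card α ≤ Nat.card γ) :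
    lowerIr (hubGraph α β γ) = Nat.card α := by
  have ⟨_, _⟩ : Nonempty γ ∧ Finite γ := Nat.card_pos_iff.1 (Nat.card_pos.trans_le h)
  rw [isMaxIrredundant_range_center.lowerIr_eq_ncard, ncard_range_center]
  · exact Set.forall_mem_range.2 isGuarded_center
  · exact Set.forall_mem_range.2 fun i ↦
      ncard_range_center.trans_le (h.trans_eq (ncard_leafSet_center i).symm)

/-- The coloring of the hub graph that extends an arbitrary coloring `f` of the centers, gives the
hubs pairwise distinct new colors and reuses these: `b` for all leaves, and at the tips of each hub
the color of another hub, chosen by the fixed-point-free map `g`. -/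
def coloring (f : α → δ) (b : β) (g : β → β) (hg : ∀ q, g q ≠ q) :
    (hubGraph α β γ).Coloring (δ ⊕ β) :=
  SimpleGraph.Coloring.mk
    (fun
      | center i => Sum.inl (f i)
      | hub q => Sum.inr q
      | leaf _ _ => Sum.inr b
      | tip q _ => Sum.inr (g q)) <| by
    rintro (_ | _ | _ | q) (_ | _ | _ | q') h <;> simp_all [adj_iff, HalfAdj, (hg _).symm]

theorem nonempty_coloring [Nontrivial β] (f : α → δ) :
    ∃ C : (hubGraph α β γ).Coloring (δ ⊕ β), ∀ i, C (center i) = Sum.inl (f i) := by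
  choose g hg using fun q : β ↦ exists_ne q
  exact ⟨coloring f (Classical.arbitrary β) g hg, fun _ ↦ rfl⟩

theorem chromaticNumber_eq [Finite β] [Nonempty α] [Nontrivial β] :
    (hubGraph α β γ).chromaticNumber = (Nat.card β + 1 : ℕ) := by
  inhabit α
  have := Fintype.ofFinite β
  apply le_antisymm
  · obtain ⟨C, -⟩ := nonempty_coloring (γ := γ) (β := β) fun _ : α ↦ ()
    simpa [add_comm] using C.colorable.chromaticNumber_le
  · refine SimpleGraph.le_chromaticNumber_of_pairwise_adj (ι := Option β) (by simp)
      (fun o ↦ o.elim (center default) hub) ?_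
    rintro (_ | q) (_ | q') hne <;> simp_all [adj_iff, HalfAdj]

theorem irChrom_eq [Finite α] [Finite β] [Nonempty α] [Nontrivial β]
    (h : Nat.card α + Nat.card β ≤ Nat.card γ) :
    irChrom (hubGraph α β γ) = Nat.card α + Nat.card β := by
  have ⟨_, _⟩ : Nonempty γ ∧ Finite γ :=
    Nat.card_pos_iff.1 (Nat.card_pos.trans_le ((Nat.le_add_right _ _).trans h))
  refine IsLeast.csInf_eq ⟨?_, fun n hn ↦ ?_⟩
  · obtain ⟨C, hC⟩ := nonempty_coloring (γ := γ) (β := β) (id : α → α)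
    rw [← Nat.card_sum]
    refine IrredColorable.of_coloring C isMaxIrredundant_range_center ?_
    rintro _ ⟨i, rfl⟩ _ ⟨i', rfl⟩ heq
    simpa [hC] using heq
  · have hcard : (Set.range (center : α → HubVertex α β γ)).ncard +
        (Set.range (hub : β → HubVertex α β γ)).ncard = Nat.card α + Nat.card β := by
      rw [ncard_range_center, ncard_range_hub]
    rw [← hcard]
    exact hn.ncard_add_ncard_le (Set.forall_mem_range.2 isGuarded_center)
      (Set.forall_mem_range.2 fun i ↦ hcard.trans_le (h.trans_eq (ncard_leafSet_center i).symm))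
      isClique_range_hub
      (Set.forall_mem_range.2 fun i ↦ Set.forall_mem_range.2 (adj_center_hub i))

end hubGraph

/-- for `k ≥ 3` and `l ≥ 1` there exists a graph with
`χ(G) = k`, `ir(G) = l` and `χᵢ(G) = k + l − 1`. -/
theorem exists_graph_irChrom_eq_chrom_add_ir_sub_one
    (k l : ℕ) (hk : 3 ≤ k) (hl : 1 ≤ l) :
    ∃ (n : ℕ) (G : SimpleGraph (Fin n)),
      G.chromaticNumber = (k : ℕ∞) ∧ lowerIr G = l ∧ irChrom G = k + l - 1 := by
  have : Nonempty (Fin l) := ⟨⟨0, hl⟩⟩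
  have : Nontrivial (Fin (k - 1)) := Fin.nontrivial_iff_two_le.2 (by omega)
  let G := hubGraph (Fin l) (Fin (k - 1)) (Fin (k + l))
  let e := SimpleGraph.Iso.map (Finite.equivFin _) G
  refine ⟨_, _, (SimpleGraph.chromaticNumber_congr e).symm.trans ?_,
    (lowerIr_congr e).symm.trans ?_, (irChrom_congr e).symm.trans ?_⟩
  · rw [hubGraph.chromaticNumber_eq, Nat.card_fin, Nat.sub_add_cancel (by omega)]
  · rw [hubGraph.lowerIr_eq, Nat.card_fin]
    simp
  · rw [hubGraph.irChrom_eq] <;> simp only [Nat.card_fin] <;> omega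
end

section
/- For all natural numbers k and n with 2 ≤ k ≤ n, there exists a finite simple graph G of order n such that χ_i(G) = k. -/
/-!  Common definitions: irredundance, irredundance coloring,
irredundance compelling coloring, and related graph parameters. -/

variable {V : Type*}

/-!
A universal vertex `v` dominates the graph, so `{v}` is a maximal irredundant set, and it is rainbow
under every coloring; hence `χᵢ(G) = χ(G)` whenever `G` has a universal vertex. The complete
`k`-partite graph on `n` vertices with parts of sizes `1, …, 1, n - k + 1` has one for `k ≥ 2`, and
its chromatic number is `k`.
-/

section

variable {G : SimpleGraph V} {S : Set V} {v : V}

theorem IsDomSet.biUnion_closedNbr_eq_univ (hS : IsDomSet G S) :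
    ⋃ w ∈ S, closedNbr G w = Set.univ := by
  refine Set.eq_univ_of_forall fun x ↦ ?_
  obtain hx | ⟨u, hu, hux⟩ := hS x
  · exact Set.mem_biUnion hx (Set.mem_insert x _)
  · exact Set.mem_biUnion hu (Set.mem_insert_of_mem u hux)

theorem IsDomSet.isMaxIrredundant (hS : IsDomSet G S) (hirr : IsIrredundant G S) :
    IsMaxIrredundant G S := by
  refine ⟨hirr, fun w hw hins ↦ ?_⟩
  have hpn : pnSet G (insert w S) w = ∅ := by
    rw [pnSet, Set.insert_sdiff_self_of_notMem hw, hS.biUnion_closedNbr_eq_univ, Set.sdiff_univ]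
  exact (hins w (Set.mem_insert w S)).ne_empty hpn

theorem isIrredundant_singleton (G : SimpleGraph V) (v : V) : IsIrredundant G {v} := by
  intro w hw
  obtain rfl : w = v := hw
  exact ⟨w, by simp [pnSet, closedNbr]⟩

theorem isDomSet_singleton_of_isUniversal (hv : G.IsUniversal v) : IsDomSet G {v} := by
  intro w
  obtain rfl | hne := eq_or_ne v w
  · exact Or.inl rfl
  · exact Or.inr ⟨v, rfl, hv hne⟩

theorem isMaxIrredundant_singleton_of_isUniversal (hv : G.IsUniversal v) :
    IsMaxIrredundant G {v} :=
  (isDomSet_singleton_of_isUniversal hv).isMaxIrredundant (isIrredundant_singleton G v)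

theorem IrredColorable.colorable {k : ℕ} (h : IrredColorable G k) : G.Colorable k := by
  obtain ⟨C, hC, -⟩ := h
  exact ⟨SimpleGraph.Coloring.mk C fun {u w} ↦ hC u w⟩

theorem irredColorable_iff_colorable_of_isUniversal (hv : G.IsUniversal v) {k : ℕ} :
    IrredColorable G k ↔ G.Colorable k :=
  ⟨IrredColorable.colorable, fun ⟨C⟩ ↦ ⟨C, fun _ _ ↦ C.valid, {v},
    isMaxIrredundant_singleton_of_isUniversal hv, Set.injOn_singleton C v⟩⟩

theorem irChrom_eq_chromaticNumber_of_isUniversal (hv : G.IsUniversal v) {k : ℕ}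
    (hG : G.Colorable k) : (irChrom G : ℕ∞) = G.chromaticNumber := by
  simp only [irChrom, irredColorable_iff_colorable_of_isUniversal hv, hG.chromaticNumber_eq_sInf]

end

section

variable {W : Type*} {f : V → W}

theorem chromaticNumber_comap_of_surjective (H : SimpleGraph W) (hf : Function.Surjective f) :
    (H.comap f).chromaticNumber = H.chromaticNumber := by
  have toH : H.comap f →g H := SimpleGraph.Hom.comap f H
  have ofH : H →g H.comap f :=
    ⟨Function.surjInv hf, by simp [Function.surjInv_eq hf]⟩
  exact le_antisymm (SimpleGraph.chromaticNumber_mono_of_hom toH)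
    (SimpleGraph.chromaticNumber_mono_of_hom ofH)

theorem isUniversal_comap_top {v : V} (hv : ∀ w, f w = f v → w = v) :
    ((⊤ : SimpleGraph W).comap f).IsUniversal v :=
  fun w hne heq ↦ hne (hv w heq.symm).symm

theorem irChrom_comap_top [Fintype W] (hf : Function.Surjective f) {v : V}
    (hv : ∀ w, f w = f v → w = v) :
    irChrom ((⊤ : SimpleGraph W).comap f) = Fintype.card W := by
  have hχ : ((⊤ : SimpleGraph W).comap f).chromaticNumber = Fintype.card W := by
    rw [chromaticNumber_comap_of_surjective ⊤ hf, SimpleGraph.chromaticNumber_top]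
  have hcol := SimpleGraph.chromaticNumber_le_iff_colorable.1 hχ.le
  have hir := irChrom_eq_chromaticNumber_of_isUniversal (isUniversal_comap_top hv) hcol
  exact_mod_cast hir.trans hχ

end

theorem exists_surjective_fin_with_singleton_fiber {k n : ℕ} (hk : 2 ≤ k) (hn : k ≤ n) :
    ∃ f : Fin n → Fin k, Function.Surjective f ∧ ∃ v, ∀ w, f w = f v → w = v := by
  let f : Fin n → Fin k := fun u ↦ ⟨min u (k - 1), by omega⟩
  have hf : Function.RightInverse (Fin.castLE hn) f := by
    intro i
    simp only [f, Fin.ext_iff, Fin.val_castLE]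
    omega
  refine ⟨f, hf.surjective, ⟨0, by omega⟩, fun w hw ↦ ?_⟩
  simp only [f, Fin.ext_iff] at hw ⊢
  omega

/-- for `2 ≤ k ≤ n` there exists a graph of order `n` with
`χᵢ(G) = k`. -/
theorem exists_graph_irChrom_eq (k n : ℕ) (hk : 2 ≤ k) (hn : k ≤ n) :
    ∃ G : SimpleGraph (Fin n), irChrom G = k := by
  obtain ⟨f, hf, v, hv⟩ := exists_surjective_fin_with_singleton_fiber hk hn
  exact ⟨(⊤ : SimpleGraph (Fin k)).comap f, by simpa using irChrom_comap_top hf hv⟩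
end
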